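/- For an Einstein metric g with Schouten tensor P = Λg (Λ a nonzero constant), the ambient metric g̃ = −2 du dt + (t² − 2Λut + Λ²u²) g in coordinates r = t − Λu, s = t + Λu takes the product-cone form g̃ = (1/(2Λ))(dr² − ds²) + r² g, and this metric is Ricci-flat. -/

import Mathlib

open scoped BigOperators

/-!
The coordinate statement is the identity `(t - Λu)² = r²` together with polarization of
`-2 du dt = (dr² - ds²) / (2Λ)`.

For Ricci-flatness, the trace of `P = Λ g` gives `Ric = 2 (n - 1) Λ g` (`ricci_of_schouten`).
The cone metric is block diagonal, so where `r ≠ 0` its only nonzero Christoffel symbols are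
`Γ^r_{ab} = -2Λ r g_{ab}`, `Γ^a_{rb} = δ^a_b / r`, and those of `g` (`christoffel_coneMetric`).
Substituting these and their derivatives (`pd_coneGamma`) into the Ricci tensor, every component
vanishes directly except the base block, which equals `Ric_{ab} - 2 (n - 1) Λ g_{ab}`
(`ricci_coneMetric`), and this is zero by the Einstein equation.
-/

/-! Local-coordinate pseudo-Riemannian geometry on a chart `ι → ℝ`. -/

variable {ι : Type} [Fintype ι] [DecidableEq ι]

/-- Partial derivative of a function in the i-th coordinate direction. -/
noncomputable def pd (i : ι) (f : (ι → ℝ) → ℝ) (x : ι → ℝ) : ℝ :=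
  fderiv ℝ f x (Pi.single i 1)

/-- Christoffel symbols Γ^k_{ij} of the Levi-Civita connection of the metric g. -/
noncomputable def christoffel (g : (ι → ℝ) → Matrix ι ι ℝ) (k i j : ι) (x : ι → ℝ) : ℝ :=
  (1/2) * ∑ l, (g x)⁻¹ k l *
    (pd i (fun y => g y l j) x + pd j (fun y => g y l i) x - pd l (fun y => g y i j) x)

/-- Riemann curvature tensor R^l_{kij} (component of R(∂ᵢ,∂ⱼ)∂ₖ along ∂ₗ). -/
noncomputable def riemann (g : (ι → ℝ) → Matrix ι ι ℝ) (l k i j : ι) (x : ι → ℝ) : ℝ :=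
  pd i (christoffel g l j k) x - pd j (christoffel g l i k) x
  + ∑ m, christoffel g l i m x * christoffel g m j k x
  - ∑ m, christoffel g l j m x * christoffel g m i k x

/-- Ricci tensor Ric_{jk} = R^i_{j i k}. -/
noncomputable def ricci (g : (ι → ℝ) → Matrix ι ι ℝ) (j k : ι) (x : ι → ℝ) : ℝ :=
  ∑ i, riemann g i j i k x

/-- Scalar curvature Scal = g^{jk} Ric_{jk}. -/
noncomputable def scal (g : (ι → ℝ) → Matrix ι ι ℝ) (x : ι → ℝ) : ℝ :=
  ∑ j, ∑ k, (g x)⁻¹ j k * ricci g j k x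

/-- Schouten tensor P = (1/(n-2))(Ric - (Scal/(2(n-1))) g). -/
noncomputable def schouten (g : (ι → ℝ) → Matrix ι ι ℝ) (j k : ι) (x : ι → ℝ) : ℝ :=
  (1 / ((Fintype.card ι : ℝ) - 2)) *
    (ricci g j k x - scal g x / (2 * ((Fintype.card ι : ℝ) - 1)) * g x j k)

/-- Covariant derivative of the vector field K in the direction of the tangent
vector v at the point x, (∇_v K)^k = v(K^k) + Γ^k_{ij} vⁱ Kʲ. -/
noncomputable def covDeriv (g : (ι → ℝ) → Matrix ι ι ℝ) (K : (ι → ℝ) → ι → ℝ)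
    (v : ι → ℝ) (x : ι → ℝ) : ι → ℝ :=
  fun k => fderiv ℝ (fun y => K y k) x v
    + ∑ i, ∑ j, christoffel g k i j x * v i * K x j

/-- Index type for the ambient space: coordinates (t, x, u) (or (r, x, s)). -/
abbrev AmbIdx (ι : Type) := Unit ⊕ ι ⊕ Unit

/-- First coordinate: `t` (resp. `r`). -/
abbrev tIdx : AmbIdx ι := Sum.inl ()
/-- Last coordinate: `u` (resp. `s`). -/
abbrev uIdx : AmbIdx ι := Sum.inr (Sum.inr ())

/-- The ambient metric g̃ = −2 du dt + (t² − 2Λut + Λ²u²) g of an Einstein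
metric g with P = Λg, in the coordinates (t, x, u). -/
noncomputable def ambMetricE (g : (ι → ℝ) → Matrix ι ι ℝ) (Λ : ℝ)
    (y : AmbIdx ι → ℝ) : Matrix (AmbIdx ι) (AmbIdx ι) ℝ :=
  Matrix.of fun i j =>
    match i, j with
    | Sum.inl _, Sum.inr (Sum.inr _) => -1
    | Sum.inr (Sum.inr _), Sum.inl _ => -1
    | Sum.inr (Sum.inl a), Sum.inr (Sum.inl b) =>
        ((y tIdx) ^ 2 - 2 * Λ * y uIdx * y tIdx + Λ ^ 2 * (y uIdx) ^ 2) *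
          g (fun k => y (Sum.inr (Sum.inl k))) a b
    | _, _ => 0

/-- The product-cone metric g̃ = (1/(2Λ))(dr² − ds²) + r² g in coordinates (r, x, s). -/
noncomputable def coneMetric (g : (ι → ℝ) → Matrix ι ι ℝ) (Λ : ℝ)
    (y : AmbIdx ι → ℝ) : Matrix (AmbIdx ι) (AmbIdx ι) ℝ :=
  Matrix.of fun i j =>
    match i, j with
    | Sum.inl _, Sum.inl _ => 1 / (2 * Λ)
    | Sum.inr (Sum.inr _), Sum.inr (Sum.inr _) => -(1 / (2 * Λ))
    | Sum.inr (Sum.inl a), Sum.inr (Sum.inl b) =>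
        (y tIdx) ^ 2 * g (fun k => y (Sum.inr (Sum.inl k))) a b
    | _, _ => 0

/-- The (linear) coordinate change (r, x, s) ↦ (t, x, u) with
t = (r+s)/2 and u = (s−r)/(2Λ), i.e. r = t − Λu, s = t + Λu. -/
noncomputable def coordChange (Λ : ℝ) (y : AmbIdx ι → ℝ) : AmbIdx ι → ℝ :=
  fun i =>
    match i with
    | Sum.inl _ => (y tIdx + y uIdx) / 2
    | Sum.inr (Sum.inr _) => (y uIdx - y tIdx) / (2 * Λ)
    | Sum.inr (Sum.inl k) => y (Sum.inr (Sum.inl k))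

/-! ### Derivatives of functions pulled back from the base -/

/-- The projection of the ambient chart `(r, x, s)` onto the base chart `x`. -/
def baseProj (ι : Type) : (AmbIdx ι → ℝ) →L[ℝ] (ι → ℝ) :=
  ContinuousLinearMap.pi fun k => ContinuousLinearMap.proj (Sum.inr (Sum.inl k))

lemma baseProj_apply (y : AmbIdx ι → ℝ) :
    baseProj ι y = fun k => y (Sum.inr (Sum.inl k)) := rfl

lemma baseProj_single_x (a : ι) :
    baseProj ι (Pi.single (Sum.inr (Sum.inl a)) 1) = Pi.single a 1 := by
  ext k
  simp [baseProj_apply, Pi.single_apply]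

lemma baseProj_single_t : baseProj ι (Pi.single tIdx 1) = 0 := by
  ext k
  simp [baseProj_apply]

lemma baseProj_single_u : baseProj ι (Pi.single uIdx 1) = 0 := by
  ext k
  simp [baseProj_apply]

/-- Differentiability descends from a pullback to the base by composing with an affine
section of the projection through the given point. -/
lemma differentiableAt_of_comp_baseProj (f : (ι → ℝ) → ℝ) (y : AmbIdx ι → ℝ)
    (h : DifferentiableAt ℝ (fun z => f (baseProj ι z)) y) :
    DifferentiableAt ℝ f (baseProj ι y) := by
  let σ : (ι → ℝ) → (AmbIdx ι → ℝ) := fun x i =>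
    match i with
    | Sum.inr (Sum.inl k) => x k
    | Sum.inl _ => y tIdx
    | Sum.inr (Sum.inr _) => y uIdx
  have hσ : Differentiable ℝ σ := by
    refine differentiable_pi.2 fun i => ?_
    rcases i with _ | k | _ <;> simp only [σ] <;> fun_prop
  have hy : σ (baseProj ι y) = y := by
    ext i
    rcases i with _ | k | _ <;> rfl
  exact DifferentiableAt.comp (f := σ) (g := fun z => f (baseProj ι z)) (baseProj ι y)
    (by rwa [hy]) (hσ _)

/-- Chain rule for pullbacks. No regularity of `f` is needed: if one side is not
differentiable then neither is the other, and both derivatives are the junk value `0`. -/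
lemma fderiv_comp_baseProj (f : (ι → ℝ) → ℝ) (y v : AmbIdx ι → ℝ) :
    fderiv ℝ (fun z => f (baseProj ι z)) y v = fderiv ℝ f (baseProj ι y) (baseProj ι v) := by
  by_cases h : DifferentiableAt ℝ f (baseProj ι y)
  · have := (h.hasFDerivAt.comp y (baseProj ι).hasFDerivAt).fderiv
    change fderiv ℝ (f ∘ baseProj ι) y v = _
    rw [this]; rfl
  · rw [fderiv_zero_of_not_differentiableAt h, fderiv_zero_of_not_differentiableAt
      fun h' => h (differentiableAt_of_comp_baseProj f y h')]
    rfl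

lemma pd_x_pullback (a : ι) (f : (ι → ℝ) → ℝ) (y : AmbIdx ι → ℝ) :
    pd (Sum.inr (Sum.inl a)) (fun z => f (baseProj ι z)) y = pd a f (baseProj ι y) := by
  simp only [pd, fderiv_comp_baseProj, baseProj_single_x]

lemma pd_t_pullback (f : (ι → ℝ) → ℝ) (y : AmbIdx ι → ℝ) :
    pd tIdx (fun z => f (baseProj ι z)) y = 0 := by
  simp only [pd, fderiv_comp_baseProj, baseProj_single_t, map_zero]

lemma pd_u_pullback (f : (ι → ℝ) → ℝ) (y : AmbIdx ι → ℝ) :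
    pd uIdx (fun z => f (baseProj ι z)) y = 0 := by
  simp only [pd, fderiv_comp_baseProj, baseProj_single_u, map_zero]

lemma pd_const (i : AmbIdx ι) (c : ℝ) (y : AmbIdx ι → ℝ) : pd i (fun _ => c) y = 0 := by
  simp [pd]

/-- Product rule for a function of `r` times a pullback from the base. -/
lemma pd_mul_pullback (i : AmbIdx ι) (φ : ℝ → ℝ) (φ' : ℝ) (f : (ι → ℝ) → ℝ)
    (y : AmbIdx ι → ℝ) (hφ : HasDerivAt φ φ' (y tIdx)) (hf : DifferentiableAt ℝ f (baseProj ι y)) :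
    pd i (fun z => φ (z tIdx) * f (baseProj ι z)) y =
      φ (y tIdx) * pd i (fun z => f (baseProj ι z)) y
        + φ' * (Pi.single i 1 : AmbIdx ι → ℝ) tIdx * f (baseProj ι y) := by
  have h1 : HasFDerivAt (fun z : AmbIdx ι → ℝ => φ (z tIdx))
      (φ' • ContinuousLinearMap.proj (R := ℝ) (φ := fun _ : AmbIdx ι => ℝ) tIdx) y :=
    HasDerivAt.comp_hasFDerivAt (f := fun z : AmbIdx ι → ℝ => z tIdx) y hφ
      (ContinuousLinearMap.proj (R := ℝ) (φ := fun _ : AmbIdx ι => ℝ) tIdx).hasFDerivAt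
  have h2 : DifferentiableAt ℝ (fun z => f (baseProj ι z)) y :=
    hf.comp y (baseProj ι).differentiableAt
  have h3 := (h1.mul h2.hasFDerivAt).fderiv
  change fderiv ℝ (fun z => φ (z tIdx) * f (baseProj ι z)) y = _ at h3
  simp only [pd, h3]
  simp
  ring

lemma pd_fun_r (i : AmbIdx ι) (φ : ℝ → ℝ) (φ' : ℝ)
    (y : AmbIdx ι → ℝ) (hφ : HasDerivAt φ φ' (y tIdx)) :
    pd i (fun z => φ (z tIdx)) y = φ' * (Pi.single i 1 : AmbIdx ι → ℝ) tIdx := by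
  have h := pd_mul_pullback i φ φ' (fun _ => 1) y hφ (differentiableAt_const _)
  simpa [pd_const] using h

/-! ### The Einstein equation of the base -/

lemma christoffel_symm (g : (ι → ℝ) → Matrix ι ι ℝ) (hg : ∀ x i j, g x i j = g x j i)
    (k i j : ι) (x : ι → ℝ) : christoffel g k i j x = christoffel g k j i x := by
  have h : (fun y => g y i j) = fun y => g y j i := funext fun y => hg y i j
  unfold christoffel
  refine congrArg _ (Finset.sum_congr rfl fun l _ => ?_)
  rw [h]; ring

/-- Taking the trace of `P = Λ g` gives `Scal = 2 n (n - 1) Λ`, hence `Ric = 2 (n - 1) Λ g`.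
In dimensions one and two, where a denominator of `schouten` is `0`, the hypothesis
contradicts nondegeneracy, since it forces `Λ g = 0`. -/
lemma ricci_of_schouten (g : (ι → ℝ) → Matrix ι ι ℝ) (Λ : ℝ) (hΛ : Λ ≠ 0)
    (hgsymm : ∀ x i j, g x i j = g x j i)
    (hdet : ∀ x, IsUnit (g x).det)
    (heinstein : ∀ x i j, schouten g i j x = Λ * g x i j) (x : ι → ℝ) (a b : ι) :
    ricci g a b x = 2 * ((Fintype.card ι : ℝ) - 1) * Λ * g x a b := by
  have hne : ∃ i j, g x i j ≠ 0 := by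
    by_contra! h
    have h0 : g x = 0 := by ext i j; exact h i j
    have hu := hdet x
    have : Nonempty ι := ⟨a⟩
    rw [h0, Matrix.det_zero] at hu
    exact not_isUnit_zero hu
  obtain ⟨i₀, j₀, h₀⟩ := hne
  have hn1 : Fintype.card ι ≠ 1 := by
    intro h1
    have : Subsingleton ι := Fintype.card_le_one_iff_subsingleton.1 h1.le
    -- In dimension one the curvature vanishes by antisymmetry in the last two indices.
    have hr : ricci g i₀ j₀ x = 0 := by
      unfold ricci
      refine Finset.sum_eq_zero fun i _ => ?_
      rw [Subsingleton.elim j₀ i]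
      simp [riemann]
    have := heinstein x i₀ j₀
    simp [schouten, hr, h1] at this
    tauto
  have hn2 : Fintype.card ι ≠ 2 := by
    intro h2
    have := heinstein x i₀ j₀
    simp [schouten, h2] at this
    tauto
  have hc1 : (Fintype.card ι : ℝ) - 1 ≠ 0 := by
    rw [sub_ne_zero]; exact_mod_cast hn1
  have hc2 : (Fintype.card ι : ℝ) - 2 ≠ 0 := by
    rw [sub_ne_zero]; exact_mod_cast hn2
  have hric : ∀ i j, ricci g i j x = (((Fintype.card ι : ℝ) - 2) * Λ +
      scal g x / (2 * ((Fintype.card ι : ℝ) - 1))) * g x i j := by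
    intro i j
    have := heinstein x i j
    unfold schouten at this
    field_simp at this ⊢
    linarith
  have htr : ∑ j, ∑ k, (g x)⁻¹ j k * g x j k = Fintype.card ι := by
    have h1 : ∑ j, ∑ k, (g x)⁻¹ j k * g x j k = Matrix.trace ((g x)⁻¹ * g x) := by
      simp only [Matrix.trace, Matrix.diag, Matrix.mul_apply]
      refine Finset.sum_congr rfl fun j _ => Finset.sum_congr rfl fun k _ => ?_
      rw [hgsymm x j k]
    rw [h1, Matrix.nonsing_inv_mul _ (hdet x), Matrix.trace_one]
  have hsc : scal g x = (((Fintype.card ι : ℝ) - 2) * Λ +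
      scal g x / (2 * ((Fintype.card ι : ℝ) - 1))) * Fintype.card ι := by
    conv_lhs => unfold scal
    rw [← htr, Finset.mul_sum]
    refine Finset.sum_congr rfl fun j _ => ?_
    rw [Finset.mul_sum]
    refine Finset.sum_congr rfl fun k _ => ?_
    rw [hric, htr]; ring
  have hS : scal g x = 2 * (Fintype.card ι : ℝ) * ((Fintype.card ι : ℝ) - 1) * Λ := by
    field_simp at hsc
    apply mul_left_cancel₀ hc2
    linarith
  rw [hric, hS]
  field_simp
  ring

/-! ### The Levi-Civita connection of the cone -/

/-- The inverse of the cone metric where `r ≠ 0`: `diag (2Λ, r⁻² g⁻¹, -2Λ)`. -/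
noncomputable def coneInv (g : (ι → ℝ) → Matrix ι ι ℝ) (Λ : ℝ)
    (y : AmbIdx ι → ℝ) : Matrix (AmbIdx ι) (AmbIdx ι) ℝ :=
  Matrix.of fun i j =>
    match i, j with
    | Sum.inl _, Sum.inl _ => 2 * Λ
    | Sum.inr (Sum.inr _), Sum.inr (Sum.inr _) => -(2 * Λ)
    | Sum.inr (Sum.inl a), Sum.inr (Sum.inl b) =>
        (y tIdx ^ 2)⁻¹ * (g (baseProj ι y))⁻¹ a b
    | _, _ => 0

lemma coneMetric_inv (g : (ι → ℝ) → Matrix ι ι ℝ) (Λ : ℝ) (hΛ : Λ ≠ 0)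
    (hdet : ∀ x, IsUnit (g x).det) (y : AmbIdx ι → ℝ) (hy : y tIdx ≠ 0) :
    (coneMetric g Λ y)⁻¹ = coneInv g Λ y := by
  apply Matrix.inv_eq_right_inv
  ext i j
  have hgg := Matrix.mul_nonsing_inv _ (hdet (baseProj ι y))
  rcases i with _ | a | _ <;> rcases j with _ | b | _ <;>
    simp [Matrix.mul_apply, coneMetric, coneInv, Fintype.sum_sum_type, Matrix.one_apply]
  case inr.inl.inr.inl a b =>
    have := congrFun (congrFun hgg a) b
    rw [Matrix.mul_apply, Matrix.one_apply] at this
    rw [← this]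
    refine Finset.sum_congr rfl fun c _ => ?_
    rw [← baseProj_apply]
    field_simp
  all_goals field_simp

/-- The closed form of the Christoffel symbols of the cone metric where `r ≠ 0`:
`Γ^r_{ab} = -2Λ r g_{ab}`, `Γ^a_{rb} = Γ^a_{br} = δ^a_b / r`, `Γ^c_{ab}` that of the base,
and all others zero. -/
noncomputable def coneGamma (g : (ι → ℝ) → Matrix ι ι ℝ) (Λ : ℝ) (k i j : AmbIdx ι)
    (y : AmbIdx ι → ℝ) : ℝ :=
  match k, i, j with
  | Sum.inl _, Sum.inr (Sum.inl a), Sum.inr (Sum.inl b) =>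
      (-(2 * Λ) * y tIdx) * g (baseProj ι y) a b
  | Sum.inr (Sum.inl c), Sum.inl _, Sum.inr (Sum.inl b) => (y tIdx)⁻¹ * if c = b then 1 else 0
  | Sum.inr (Sum.inl c), Sum.inr (Sum.inl a), Sum.inl _ => (y tIdx)⁻¹ * if c = a then 1 else 0
  | Sum.inr (Sum.inl c), Sum.inr (Sum.inl a), Sum.inr (Sum.inl b) =>
      christoffel g c a b (baseProj ι y)
  | _, _, _ => 0

/-- The closed form of the first derivatives `∂ₖ g̃ᵢⱼ` of the cone metric. -/
noncomputable def conePd (g : (ι → ℝ) → Matrix ι ι ℝ) (k i j : AmbIdx ι)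
    (y : AmbIdx ι → ℝ) : ℝ :=
  match k, i, j with
  | Sum.inl _, Sum.inr (Sum.inl a), Sum.inr (Sum.inl b) => 2 * y tIdx * g (baseProj ι y) a b
  | Sum.inr (Sum.inl c), Sum.inr (Sum.inl a), Sum.inr (Sum.inl b) =>
      y tIdx ^ 2 * pd c (fun x => g x a b) (baseProj ι y)
  | _, _, _ => 0

lemma pd_coneMetric (g : (ι → ℝ) → Matrix ι ι ℝ) (Λ : ℝ)
    (hg : ∀ i j, Differentiable ℝ fun y => g y i j) (k i j : AmbIdx ι) (y : AmbIdx ι → ℝ) :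
    pd k (fun z => coneMetric g Λ z i j) y = conePd g k i j y := by
  rcases i with _ | a | _ <;> rcases j with _ | b | _
  case inr.inl.inr.inl =>
    have h := pd_mul_pullback k (fun r => r ^ 2) (2 * y tIdx) (fun x => g x a b) y
      (by simpa using hasDerivAt_pow 2 (y tIdx)) (hg a b _)
    change pd k (fun z => z tIdx ^ 2 * g (baseProj ι z) a b) y = _
    rw [h]
    rcases k with _ | c | _
    · rw [pd_t_pullback (fun x => g x a b)]; simp [conePd]
    · rw [pd_x_pullback c (fun x => g x a b)]; simp [conePd]
    · rw [pd_u_pullback (fun x => g x a b)]; simp [conePd]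
  all_goals
    rcases k with _ | c | _ <;> exact pd_const _ _ _

lemma christoffel_coneMetric (g : (ι → ℝ) → Matrix ι ι ℝ) (Λ : ℝ) (hΛ : Λ ≠ 0)
    (hg : ∀ i j, Differentiable ℝ fun y => g y i j)
    (hdet : ∀ x, IsUnit (g x).det) (k i j : AmbIdx ι) (y : AmbIdx ι → ℝ) (hy : y tIdx ≠ 0) :
    christoffel (coneMetric g Λ) k i j y = coneGamma g Λ k i j y := by
  have hgg : ∀ c b, ∑ l, (g (baseProj ι y))⁻¹ c l * g (baseProj ι y) l b =
      if c = b then 1 else 0 := by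
    intro c b
    have := congrFun (congrFun (Matrix.nonsing_inv_mul _ (hdet (baseProj ι y))) c) b
    rwa [Matrix.mul_apply, Matrix.one_apply] at this
  unfold christoffel
  simp only [pd_coneMetric g Λ hg, coneMetric_inv g Λ hΛ hdet y hy]
  rcases k with _ | c | _ <;> rcases i with _ | a | _ <;> rcases j with _ | b | _ <;>
    simp only [Fintype.sum_sum_type, coneInv, conePd, coneGamma, Matrix.of_apply,
      Finset.univ_unique, Finset.sum_singleton, zero_mul, mul_zero, add_zero, zero_add,
      sub_zero, sub_self, Finset.sum_const_zero]
  · ring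
  · rw [← hgg, Finset.mul_sum, Finset.mul_sum]
    refine Finset.sum_congr rfl fun l _ => ?_
    field_simp
  · rw [← hgg, Finset.mul_sum, Finset.mul_sum]
    refine Finset.sum_congr rfl fun l _ => ?_
    field_simp
  · unfold christoffel
    congr 1
    refine Finset.sum_congr rfl fun l _ => ?_
    field_simp

/-! ### The Ricci tensor of the cone -/

/-- The closed form holds on the open set `r ≠ 0`, so it may be differentiated there. -/
lemma pd_christoffel_coneMetric (g : (ι → ℝ) → Matrix ι ι ℝ) (Λ : ℝ) (hΛ : Λ ≠ 0)
    (hg : ∀ i j, Differentiable ℝ fun y => g y i j)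
    (hdet : ∀ x, IsUnit (g x).det) (l k i j : AmbIdx ι) (y : AmbIdx ι → ℝ) (hy : y tIdx ≠ 0) :
    pd l (christoffel (coneMetric g Λ) k i j) y = pd l (coneGamma g Λ k i j) y := by
  have h : christoffel (coneMetric g Λ) k i j =ᶠ[nhds y] coneGamma g Λ k i j := by
    have ho : ∀ᶠ z in nhds y, z tIdx ≠ 0 :=
      (continuous_apply (tIdx : AmbIdx ι)).continuousAt.eventually_ne hy
    filter_upwards [ho] with z hz
    exact christoffel_coneMetric g Λ hΛ hg hdet k i j z hz
  unfold pd
  rw [h.fderiv_eq]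

/-- The closed form of the first derivatives `∂ₗ Γᵏᵢⱼ` of the Christoffel symbols of the cone,
where `r ≠ 0`. -/
noncomputable def coneGammaPd (g : (ι → ℝ) → Matrix ι ι ℝ) (Λ : ℝ) (l k i j : AmbIdx ι)
    (y : AmbIdx ι → ℝ) : ℝ :=
  match l, k, i, j with
  | Sum.inl _, Sum.inl _, Sum.inr (Sum.inl a), Sum.inr (Sum.inl b) =>
      -(2 * Λ) * g (baseProj ι y) a b
  | Sum.inr (Sum.inl d), Sum.inl _, Sum.inr (Sum.inl a), Sum.inr (Sum.inl b) =>
      (-(2 * Λ) * y tIdx) * pd d (fun x => g x a b) (baseProj ι y)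
  | Sum.inl _, Sum.inr (Sum.inl c), Sum.inl _, Sum.inr (Sum.inl b) =>
      -(y tIdx ^ 2)⁻¹ * if c = b then 1 else 0
  | Sum.inl _, Sum.inr (Sum.inl c), Sum.inr (Sum.inl a), Sum.inl _ =>
      -(y tIdx ^ 2)⁻¹ * if c = a then 1 else 0
  | Sum.inr (Sum.inl d), Sum.inr (Sum.inl c), Sum.inr (Sum.inl a), Sum.inr (Sum.inl b) =>
      pd d (christoffel g c a b) (baseProj ι y)
  | _, _, _, _ => 0

lemma pd_coneGamma (g : (ι → ℝ) → Matrix ι ι ℝ) (Λ : ℝ)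
    (hg : ∀ i j, Differentiable ℝ fun y => g y i j)
    (l k i j : AmbIdx ι) (y : AmbIdx ι → ℝ) (hy : y tIdx ≠ 0) :
    pd l (coneGamma g Λ k i j) y = coneGammaPd g Λ l k i j y := by
  have hinv : ∀ c : ℝ, HasDerivAt (fun r : ℝ => r⁻¹ * c) (-(y tIdx ^ 2)⁻¹ * c) (y tIdx) :=
    fun c => (hasDerivAt_inv hy).mul_const c
  rcases k with _ | c | _ <;> rcases i with _ | a | _ <;> rcases j with _ | b | _
  case inl.inr.inl.inr.inl =>
    have h := pd_mul_pullback l (fun r => -(2 * Λ) * r) (-(2 * Λ)) (fun x => g x a b) y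
      (by simpa using (hasDerivAt_id (y tIdx)).const_mul (-(2 * Λ))) (hg a b _)
    change pd l (fun z => (-(2 * Λ) * z tIdx) * g (baseProj ι z) a b) y = _
    rw [h]
    rcases l with _ | d | _
    · rw [pd_t_pullback (fun x => g x a b)]; simp [coneGammaPd]
    · rw [pd_x_pullback d (fun x => g x a b)]; simp [coneGammaPd]
    · rw [pd_u_pullback (fun x => g x a b)]; simp [coneGammaPd]
  case inr.inl.inl.inr.inl =>
    refine (pd_fun_r l _ _ y (hinv (if c = b then 1 else 0))).trans ?_
    rcases l with _ | d | _ <;> simp [coneGammaPd]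
  case inr.inl.inr.inl.inl =>
    refine (pd_fun_r l _ _ y (hinv (if c = a then 1 else 0))).trans ?_
    rcases l with _ | d | _ <;> simp [coneGammaPd]
  case inr.inl.inr.inl.inr.inl =>
    rcases l with _ | d | _
    · exact pd_t_pullback (christoffel g c a b) y
    · exact pd_x_pullback d (christoffel g c a b) y
    · exact pd_u_pullback (christoffel g c a b) y
  all_goals
    rcases l with _ | d | _ <;> exact pd_const _ _ _

/-- The cone over an Einstein metric with `Ric = 2 (n - 1) Λ g` is Ricci-flat away from `r = 0`. -/
lemma ricci_coneMetric (g : (ι → ℝ) → Matrix ι ι ℝ) (Λ : ℝ) (hΛ : Λ ≠ 0)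
    (hg : ∀ i j, Differentiable ℝ fun y => g y i j)
    (hgsymm : ∀ x i j, g x i j = g x j i)
    (hdet : ∀ x, IsUnit (g x).det)
    (hric : ∀ x a b, ricci g a b x = 2 * ((Fintype.card ι : ℝ) - 1) * Λ * g x a b)
    (y : AmbIdx ι → ℝ) (hy : y tIdx ≠ 0) (j k : AmbIdx ι) :
    ricci (coneMetric g Λ) j k y = 0 := by
  unfold ricci riemann
  simp only [pd_christoffel_coneMetric g Λ hΛ hg hdet _ _ _ _ y hy,
    pd_coneGamma g Λ hg _ _ _ _ y hy,
    christoffel_coneMetric g Λ hΛ hg hdet _ _ _ y hy]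
  rcases j with _ | a | _ <;> rcases k with _ | b | _ <;>
    simp only [Fintype.sum_sum_type, coneGamma, coneGammaPd,
      Finset.univ_unique, Finset.sum_singleton, zero_mul, mul_zero, add_zero, zero_add,
      sub_zero, sub_self, Finset.sum_const_zero, zero_sub, neg_zero]
  · refine Finset.sum_eq_zero fun c _ => ?_
    simp
    ring
  · refine Finset.sum_eq_zero fun c _ => ?_
    simp [christoffel_symm g hgsymm c b c]
  · refine Finset.sum_eq_zero fun c _ => ?_
    simp
    ring
  · have hR := hric (baseProj ι y) a b
    unfold ricci riemann at hR
    have h1 : ∑ x, -(2 * Λ) * y tIdx * g (baseProj ι y) b x *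
        ((y tIdx)⁻¹ * if x = a then 1 else 0) = -(2 * Λ) * g (baseProj ι y) b a := by
      simp
      field_simp
    -- Each summand is the corresponding summand of the base Ricci tensor plus `-2Λ g_{ba}`,
    -- with an additional `2Λ g_{ba}` in the single direction `c = b`.
    have h2 : ∀ c, (pd c (christoffel g c b a) (baseProj ι y)
          - pd b (christoffel g c c a) (baseProj ι y)
          + (((y tIdx)⁻¹ * if True then 1 else 0) * (-(2 * Λ) * y tIdx * g (baseProj ι y) b a)
            + ∑ m, christoffel g c c m (baseProj ι y) * christoffel g m b a (baseProj ι y))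
          - (((y tIdx)⁻¹ * if c = b then 1 else 0) * (-(2 * Λ) * y tIdx * g (baseProj ι y) c a)
            + ∑ m, christoffel g c b m (baseProj ι y) * christoffel g m c a (baseProj ι y)))
        = (pd c (christoffel g c b a) (baseProj ι y)
          - pd b (christoffel g c c a) (baseProj ι y)
          + ∑ m, christoffel g c c m (baseProj ι y) * christoffel g m b a (baseProj ι y)
          - ∑ m, christoffel g c b m (baseProj ι y) * christoffel g m c a (baseProj ι y))
          + (-(2 * Λ) * g (baseProj ι y) b a
            + if c = b then 2 * Λ * g (baseProj ι y) c a else 0) := by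
      intro c
      split_ifs <;> field_simp <;> ring
    simp only [h1, h2]
    rw [Finset.sum_add_distrib, hR, hgsymm _ a b, Finset.sum_add_distrib, Finset.sum_const,
      Finset.sum_ite_eq' Finset.univ b, if_pos (Finset.mem_univ b), Finset.card_univ,
      nsmul_eq_mul]
    ring

/-- For an Einstein metric g with Schouten tensor P = Λg
(Λ ≠ 0), the ambient metric −2dudt + (t² − 2Λut + Λ²u²)g takes, in the
coordinates r = t − Λu, s = t + Λu, the product-cone form
(1/(2Λ))(dr² − ds²) + r²g, and this metric is Ricci-flat. -/
theorem ambient_of_einstein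
    (g : (ι → ℝ) → Matrix ι ι ℝ) (Λ : ℝ) (hΛ : Λ ≠ 0)
    (hgsm : ∀ i j, ContDiff ℝ (⊤ : ℕ∞) fun y => g y i j)
    (hgsymm : ∀ x i j, g x i j = g x j i)
    (hdet : ∀ x, IsUnit (g x).det)
    (heinstein : ∀ x i j, schouten g i j x = Λ * g x i j) :
    (∀ (y v w : AmbIdx ι → ℝ),
      (∑ i, ∑ j, ambMetricE g Λ (coordChange Λ y) i j
          * coordChange Λ v i * coordChange Λ w j)
        = ∑ i, ∑ j, coneMetric g Λ y i j * v i * w j) ∧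
    (∀ y : AmbIdx ι → ℝ, y tIdx ≠ 0 →
      ∀ i j, ricci (coneMetric g Λ) i j y = 0) := by
  refine ⟨fun y v w => ?_, fun y hy i j => ?_⟩
  · simp only [Fintype.sum_sum_type, ambMetricE, coneMetric, coordChange, Matrix.of_apply,
      Finset.univ_unique, Finset.sum_singleton, zero_mul, add_zero, zero_add,
      Finset.sum_const_zero]
    have h : ((y tIdx + y uIdx) / 2) ^ 2 - 2 * Λ * ((y uIdx - y tIdx) / (2 * Λ)) *
        ((y tIdx + y uIdx) / 2) + Λ ^ 2 * ((y uIdx - y tIdx) / (2 * Λ)) ^ 2 = y tIdx ^ 2 := by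
      field_simp
      ring
    rw [h]
    field_simp
    ring
  · exact ricci_coneMetric g Λ hΛ (fun a b => (hgsm a b).differentiable (by simp)) hgsymm hdet
      (ricci_of_schouten g Λ hΛ hgsymm hdet heinstein) y hy i j
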